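/- Let X be a Banach space over ℝ such that for every Banach space Z over ℝ the pair (X,Z) has the Bishop–Phelps–Bollobás property (that is, X is a universal BPB domain space). Then there exists a single function η_X : (0,1) → (0,∞) such that for every Banach space Y over ℝ, the pair (X,Y) has the Bishop–Phelps–Bollobás property with the function η_X. -/

import Mathlib

open scoped ENNReal

/-- A pair `(X, Y)` of normed spaces has the Bishop–Phelps–Bollobás property with the
function `η : (0,1) → (0,∞)` (encoded as `η : ℝ → ℝ`, relevant only on `(0,1)`). -/
def BPBpWith (X Y : Type*) [NormedAddCommGroup X] [NormedSpace ℝ X]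
    [NormedAddCommGroup Y] [NormedSpace ℝ Y] (η : ℝ → ℝ) : Prop :=
  ∀ ε ∈ Set.Ioo (0 : ℝ) 1, ∀ (T₀ : X →L[ℝ] Y) (x₀ : X),
    ‖T₀‖ = 1 → ‖x₀‖ = 1 → 1 - η ε < ‖T₀ x₀‖ →
      ∃ (S : X →L[ℝ] Y) (x : X),
        ‖x‖ = 1 ∧ ‖S‖ = 1 ∧ ‖S x‖ = 1 ∧ ‖x - x₀‖ < ε ∧ ‖S - T₀‖ < ε

/-- The pair `(X, Y)` has the Bishop–Phelps–Bollobás property. -/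
def HasBPBp (X Y : Type*) [NormedAddCommGroup X] [NormedSpace ℝ X]
    [NormedAddCommGroup Y] [NormedSpace ℝ Y] : Prop :=
  ∃ η : ℝ → ℝ, (∀ ε ∈ Set.Ioo (0 : ℝ) 1, 0 < η ε) ∧ BPBpWith X Y η


/-- Passing from an `ℓ∞`-sum to one of its summands keeps the function `η`. -/
theorem BPBpWith.of_lp_top.{u} {X : Type u} [NormedAddCommGroup X] [NormedSpace ℝ X]
    (E : ℕ → Type u) [∀ n, NormedAddCommGroup (E n)] [∀ n, NormedSpace ℝ (E n)]
    {η : ℝ → ℝ} (h : BPBpWith X (lp E ∞) η) (n : ℕ) : BPBpWith X (E n) η := by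
  intro ε hε T x₀ hT hx₀ hTx
  have happ : ∀ y : X, ‖((lp.singleContinuousLinearMap ℝ E ∞ n).comp T) y‖ = ‖T y‖ := by
    intro y
    simp only [ContinuousLinearMap.comp_apply, lp.singleContinuousLinearMap_apply]
    exact lp.norm_single ENNReal.zero_lt_top n (T y)
  have hnorm : ‖(lp.singleContinuousLinearMap ℝ E ∞ n).comp T‖ = 1 := by
    rw [← hT]
    apply le_antisymm
    · exact ContinuousLinearMap.opNorm_le_bound _ (norm_nonneg _)
        fun y => (happ y).le.trans (T.le_opNorm y)
    · exact ContinuousLinearMap.opNorm_le_bound _ (norm_nonneg _)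
        fun y => (happ y).ge.trans (ContinuousLinearMap.le_opNorm _ y)
  obtain ⟨S, x, hx, hS, hSx, hxx, hST⟩ :=
    h ε hε ((lp.singleContinuousLinearMap ℝ E ∞ n).comp T) x₀ hnorm hx₀ (by rwa [happ])
  let P : lp E ∞ →L[ℝ] E n := lp.evalCLM ℝ E ∞ n
  have hP : ∀ z : lp E ∞, P z = z n := fun z => rfl
  have hPz : ∀ z : lp E ∞, ‖P z‖ ≤ ‖z‖ := fun z =>
    lp.norm_apply_le_norm ENNReal.top_ne_zero z n
  have hx1 : ‖P (S x)‖ = 1 := by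
    apply le_antisymm ((hPz _).trans hSx.le)
    by_contra! hlt
    set r := ‖S - (lp.singleContinuousLinearMap ℝ E ∞ n).comp T‖ with hr
    have hle : ‖S x‖ ≤ max ‖P (S x)‖ r := by
      apply lp.norm_le_of_forall_le ((norm_nonneg _).trans (le_max_left _ _))
      intro k
      by_cases hk : k = n
      · subst hk
        exact le_max_left _ _
      · refine le_trans ?_ (le_max_right _ _)
        have h1 := (lp.norm_apply_le_norm ENNReal.top_ne_zero
          ((S - (lp.singleContinuousLinearMap ℝ E ∞ n).comp T) x) k).trans
          (ContinuousLinearMap.le_opNorm _ x)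
        rw [hx, mul_one, ← hr] at h1
        have h2 : ((S - (lp.singleContinuousLinearMap ℝ E ∞ n).comp T) x) k = S x k := by
          simp only [ContinuousLinearMap.sub_apply, ContinuousLinearMap.comp_apply,
            lp.singleContinuousLinearMap_apply, lp.coeFn_sub, Pi.sub_apply]
          rw [lp.single_apply_ne _ _ _ hk, sub_zero]
        rwa [h2] at h1
    have := max_lt hlt (hST.trans hε.2)
    linarith
  refine ⟨P.comp S, x, hx, ?_, hx1, hxx, ?_⟩
  · apply le_antisymm
    · refine ContinuousLinearMap.opNorm_le_bound _ zero_le_one fun y => ?_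
      rw [← hS]
      exact (hPz _).trans (S.le_opNorm y)
    · have := (P.comp S).le_opNorm x
      rw [hx, mul_one] at this
      exact hx1.ge.trans this
  · refine lt_of_le_of_lt ?_ hST
    refine ContinuousLinearMap.opNorm_le_bound _ (norm_nonneg _) fun y => ?_
    refine le_trans (le_of_eq ?_) ((hPz _).trans (ContinuousLinearMap.le_opNorm _ y))
    congr 1
    simp only [ContinuousLinearMap.sub_apply, ContinuousLinearMap.comp_apply,
      lp.singleContinuousLinearMap_apply, map_sub]
    rw [hP (lp.single _ _ _), lp.single_apply_self]

/-- If `X` is a universal BPB domain space, then there is a single function `η_X` witnessing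
the Bishop–Phelps–Bollobás property of `(X, Y)` for every Banach space `Y`. -/
theorem universal_BPB_domain_has_universal_eta.{u} (X : Type u)
    [NormedAddCommGroup X] [NormedSpace ℝ X] [CompleteSpace X]
    (h : ∀ (Z : Type u) [NormedAddCommGroup Z] [NormedSpace ℝ Z] [CompleteSpace Z],
      HasBPBp X Z) :
    ∃ ηX : ℝ → ℝ, (∀ ε ∈ Set.Ioo (0 : ℝ) 1, 0 < ηX ε) ∧
      ∀ (Y : Type u) [NormedAddCommGroup Y] [NormedSpace ℝ Y] [CompleteSpace Y],
        BPBpWith X Y ηX := by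
  have key : ∀ ε ∈ Set.Ioo (0 : ℝ) 1, ∃ r : ℝ, 0 < r ∧
      ∀ (Y : Type u) [NormedAddCommGroup Y] [NormedSpace ℝ Y] [CompleteSpace Y]
        (T₀ : X →L[ℝ] Y) (x₀ : X), ‖T₀‖ = 1 → ‖x₀‖ = 1 → 1 - r < ‖T₀ x₀‖ →
        ∃ (S : X →L[ℝ] Y) (x : X),
          ‖x‖ = 1 ∧ ‖S‖ = 1 ∧ ‖S x‖ = 1 ∧ ‖x - x₀‖ < ε ∧ ‖S - T₀‖ < ε := by
    intro ε hε
    by_contra hcon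
    have hbad : ∀ n : ℕ, ∃ (Y : Type u) (_ : NormedAddCommGroup Y) (_ : NormedSpace ℝ Y)
        (_ : CompleteSpace Y) (T₀ : X →L[ℝ] Y) (x₀ : X), ‖T₀‖ = 1 ∧ ‖x₀‖ = 1 ∧
        1 - 1 / ((n : ℝ) + 1) < ‖T₀ x₀‖ ∧
        ¬ ∃ (S : X →L[ℝ] Y) (x : X),
          ‖x‖ = 1 ∧ ‖S‖ = 1 ∧ ‖S x‖ = 1 ∧ ‖x - x₀‖ < ε ∧ ‖S - T₀‖ < ε := by
      intro n
      by_contra hn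
      apply hcon
      refine ⟨1 / ((n : ℝ) + 1), by positivity, ?_⟩
      intro Y i1 i2 i3 T₀ x₀ h1 h2 h3
      by_contra h4
      exact hn ⟨Y, i1, i2, i3, T₀, x₀, h1, h2, h3, h4⟩
    choose Y i1 i2 i3 T x h1 h2 h3 h4 using hbad
    obtain ⟨η, hη, hB⟩ := h (lp Y ∞)
    obtain ⟨n, hn⟩ := exists_nat_one_div_lt (hη ε hε)
    exact h4 n (BPBpWith.of_lp_top Y hB n ε hε (T n) (x n) (h1 n) (h2 n)
      (by linarith [h3 n]))
  choose r hr0 hr using key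
  classical
  refine ⟨fun ε => if hε : ε ∈ Set.Ioo (0 : ℝ) 1 then r ε hε else 1, ?_, ?_⟩
  · intro ε hε
    simp only [dif_pos hε]
    exact hr0 ε hε
  · intro Y _ _ _ ε hε T x h1 h2 h3
    simp only [dif_pos hε] at h3
    exact hr ε hε Y T x h1 h2 h3
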